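/- Let n ≥ 1, μ ∈ ℝ, λ, Λ > 0. Let A be a C¹ matrix-valued map on ℝⁿ satisfying the uniform ellipticity condition with constants λ, Λ, and let w : ℝⁿ → ℂ be C² and satisfy the self-similar profile equation div(A∇w)(x) = (1/2)(i·w(x) + μ·w(x) + x·∇w(x)) for all x ∈ ℝⁿ. If moreover w satisfies the monotonicity condition 2μ|w(x)|² + x·∇(|w|²)(x) ≥ 0 for all x ∈ ℝⁿ, then there exists a constant C > 0 depending only on λ and Λ such that for every real-valued compactly supported smooth function ψ on ℝⁿ: ∫_{ℝⁿ} |∇w|² ψ² dx ≤ C ∫_{ℝⁿ} |w|² |∇ψ|² dx. -/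

import Mathlib

/-!
Caccioppoli's argument: test the equation with `conj w * ψ²` and take real parts.  For the flux
`V = A ∇w`, the vector field `ψ² Re (conj w · V)` is `C¹` with compact support, so its divergence

  `ψ² Re (conj w · div V) + ψ² Re (V · conj ∇w) + 2 ψ Re (conj w · (V · ∇ψ))`

has integral zero.  By the profile equation, the first term equals
`ψ²/4 * (2μ|w|² + x·∇|w|²)` (the term `i w` contributes nothing to the real part), hence it is
nonnegative by the monotonicity condition.  The second term is at least `λ|∇w|²ψ²` by ellipticity,
and by Young's inequality the third is at least
`-(λ/2)|∇w|²ψ² - (2Λ²/λ)|w|²|∇ψ|²`.  Integrating gives the claim with `C = 4Λ²/λ²`.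
-/

open MeasureTheory
open scoped BigOperators

noncomputable section

/-- The `k`-th partial derivative of `w : ℝⁿ → ℂ`. -/
def pdC {n : ℕ} (w : EuclideanSpace ℝ (Fin n) → ℂ) (x : EuclideanSpace ℝ (Fin n))
    (k : Fin n) : ℂ :=
  fderiv ℝ w x (EuclideanSpace.single k 1)

/-- `div(A ∇w)(x) = ∑ₖ ∂ₖ (∑ₗ A_{kl} ∂ₗ w)(x)`. -/
def divAgrad {n : ℕ} (A : EuclideanSpace ℝ (Fin n) → Matrix (Fin n) (Fin n) ℂ)
    (w : EuclideanSpace ℝ (Fin n) → ℂ) (x : EuclideanSpace ℝ (Fin n)) : ℂ :=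
  ∑ k, fderiv ℝ (fun y => ∑ l, A y k l * pdC w y l) x (EuclideanSpace.single k 1)

/-- Uniform ellipticity with constants `lam, Lam` at every point of `ℝⁿ`. -/
def UniformlyElliptic {n : ℕ} (A : EuclideanSpace ℝ (Fin n) → Matrix (Fin n) (Fin n) ℂ)
    (lam Lam : ℝ) : Prop :=
  ∀ x, ∀ p : Fin n → ℂ,
    lam * ∑ k, ‖p k‖ ^ 2 ≤ (∑ k, ∑ l, A x k l * p k * (starRingEnd ℂ) (p l)).re ∧
    ∑ k, ‖(A x).mulVec p k‖ ^ 2 ≤ Lam ^ 2 * ∑ k, ‖p k‖ ^ 2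

/-- The `k`-th component of the flux `A ∇w`. -/
def flux {n : ℕ} (A : EuclideanSpace ℝ (Fin n) → Matrix (Fin n) (Fin n) ℂ)
    (w : EuclideanSpace ℝ (Fin n) → ℂ) (k : Fin n) (y : EuclideanSpace ℝ (Fin n)) : ℂ :=
  ∑ l, A y k l * pdC w y l

lemma contDiff_flux {n : ℕ} {A : EuclideanSpace ℝ (Fin n) → Matrix (Fin n) (Fin n) ℂ}
    {w : EuclideanSpace ℝ (Fin n) → ℂ}
    (hA : ∀ k l : Fin n, ContDiff ℝ 1 fun x => A x k l) (hw : ContDiff ℝ 2 w) (k : Fin n) :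
    ContDiff ℝ 1 (flux A w k) := by
  unfold flux pdC
  refine ContDiff.sum fun l _ => (hA k l).mul ?_
  exact (hw.fderiv_right (m := 1) (by norm_num)).clm_apply contDiff_const

/-- The integral of a directional derivative of a compactly supported `C¹` function vanishes. -/
lemma integral_fderiv_eq_zero {n : ℕ} {f : EuclideanSpace ℝ (Fin n) → ℝ}
    (hf : ContDiff ℝ 1 f) (hc : HasCompactSupport f) (v : EuclideanSpace ℝ (Fin n)) :
    Integrable (fun x => fderiv ℝ f x v) ∧ ∫ x, fderiv ℝ f x v = 0 := by
  have hi : Integrable (fun x => fderiv ℝ f x v) :=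
    ((hf.continuous_fderiv (by norm_num)).clm_apply
      continuous_const).integrable_of_hasCompactSupport (hc.fderiv_apply ℝ v)
  refine ⟨hi, ?_⟩
  -- Integration by parts against the constant function `1`.
  have h := integral_mul_fderiv_eq_neg_fderiv_mul_of_integrable (𝕜 := ℝ) (μ := volume)
    (f := f) (g := fun _ => (1 : ℝ)) (v := v) (by simpa using hi) (by simp)
    (by simpa using hf.continuous.integrable_of_hasCompactSupport hc)
    (fun x _ => hf.differentiable (by norm_num) x) (fun _ _ => differentiableAt_const _)
  simpa using h

/-- The ellipticity lower bound pairs `A` as `∑ A_{kl} p_k conj p_l`; applied to `p = conj q`, it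
bounds the quadratic form `Re (A q · conj q)` met in the energy identity. -/
lemma UniformlyElliptic.le_inner_flux {n : ℕ}
    {A : EuclideanSpace ℝ (Fin n) → Matrix (Fin n) (Fin n) ℂ} {lam Lam : ℝ}
    (hE : UniformlyElliptic A lam Lam) (w : EuclideanSpace ℝ (Fin n) → ℂ)
    (x : EuclideanSpace ℝ (Fin n)) :
    lam * ∑ k, ‖pdC w x k‖ ^ 2 ≤ ∑ k, inner ℝ (pdC w x k) (flux A w k x) := by
  have h := (hE x fun k => (starRingEnd ℂ) (pdC w x k)).1
  simp only [RCLike.norm_conj, Complex.conj_conj] at h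
  refine h.trans_eq ?_
  simp only [Complex.inner, flux, Complex.re_sum, Finset.sum_mul]
  refine Finset.sum_congr rfl fun k _ => Finset.sum_congr rfl fun l _ => ?_
  congr 1
  ring

/-- The profile equation tested with `w`: its real part is a quarter of the monotonicity
expression. -/
lemma inner_divAgrad {n : ℕ} {A : EuclideanSpace ℝ (Fin n) → Matrix (Fin n) (Fin n) ℂ}
    {w : EuclideanSpace ℝ (Fin n) → ℂ} {μ : ℝ} (hw : ContDiff ℝ 2 w)
    {x : EuclideanSpace ℝ (Fin n)}
    (heq : divAgrad A w x =
      (1 / 2) * (Complex.I * w x + (μ : ℂ) * w x + ∑ k, (x k : ℂ) * pdC w x k)) :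
    inner ℝ (w x) (divAgrad A w x) = (1 / 4) * (2 * μ * ‖w x‖ ^ 2 +
      ∑ k, x k * fderiv ℝ (fun y => ‖w y‖ ^ 2) x (EuclideanSpace.single k 1)) := by
  have hd : DifferentiableAt ℝ w x := hw.differentiable (by norm_num) x
  have h1 : ∀ k, fderiv ℝ (fun y => ‖w y‖ ^ 2) x (EuclideanSpace.single k 1)
      = 2 * inner ℝ (w x) (pdC w x k) := by
    intro k
    simp only [← real_inner_self_eq_norm_sq]
    rw [fderiv_inner_apply ℝ hd hd, real_inner_comm (w x)]
    simp only [pdC]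
    ring
  have h2 : divAgrad A w x = (1 / 2 : ℝ) • (Complex.I * w x + μ • w x + ∑ k, x k • pdC w x k) := by
    rw [heq]
    simp only [Complex.real_smul]
    norm_num
  have h3 : inner ℝ (w x) (Complex.I * w x) = 0 := by
    simp [Complex.inner]; ring
  rw [h2, inner_smul_right, inner_add_right, inner_add_right, h3, inner_smul_right, inner_sum,
    real_inner_self_eq_norm_sq]
  simp only [h1, inner_smul_right]
  rw [zero_add, mul_add, mul_add, Finset.mul_sum, Finset.mul_sum]
  congr 1
  · ring
  · exact Finset.sum_congr rfl fun k _ => by ring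

/-- Caccioppoli inequality under the monotonicity condition
`2μ|w|² + x·∇(|w|²) ≥ 0`: `∫ |∇w|² ψ² ≤ C ∫ |w|² |∇ψ|²` with `C = C(λ, Λ)`. -/
theorem stmt_18 (n : ℕ) (hn : 1 ≤ n) (lam Lam : ℝ) (hlam : 0 < lam) (hLam : 0 < Lam) :
    ∃ C : ℝ, 0 < C ∧
      ∀ (μ : ℝ) (A : EuclideanSpace ℝ (Fin n) → Matrix (Fin n) (Fin n) ℂ)
        (w : EuclideanSpace ℝ (Fin n) → ℂ),
        (∀ k l : Fin n, ContDiff ℝ 1 fun x => A x k l) →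
        UniformlyElliptic A lam Lam →
        ContDiff ℝ 2 w →
        (∀ x, divAgrad A w x =
          (1 / 2) * (Complex.I * w x + (μ : ℂ) * w x + ∑ k, (x k : ℂ) * pdC w x k)) →
        (∀ x : EuclideanSpace ℝ (Fin n),
          0 ≤ 2 * μ * ‖w x‖ ^ 2 +
            ∑ k, x k * fderiv ℝ (fun y => ‖w y‖ ^ 2) x (EuclideanSpace.single k 1)) →
        ∀ ψ : EuclideanSpace ℝ (Fin n) → ℝ, ContDiff ℝ (⊤ : ℕ∞) ψ → HasCompactSupport ψ →
          (∫ x, (∑ k, ‖pdC w x k‖ ^ 2) * (ψ x) ^ 2) ≤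
            C * ∫ x, ‖w x‖ ^ 2 * (∑ k, (fderiv ℝ ψ x (EuclideanSpace.single k 1)) ^ 2) := by
  refine ⟨4 * Lam ^ 2 / lam ^ 2, by positivity, ?_⟩
  intro μ A w hA hE hw heq hmono ψ hψ hψc
  have hV := contDiff_flux hA hw
  have hw1 : ContDiff ℝ 1 w := hw.of_le (by norm_num)
  have hψ1 : ContDiff ℝ 1 ψ := hψ.of_le (by exact_mod_cast le_top)
  set e : Fin n → EuclideanSpace ℝ (Fin n) := fun k => EuclideanSpace.single k 1 with he
  let F : Fin n → EuclideanSpace ℝ (Fin n) → ℝ := fun k y =>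
    inner ℝ (w y) (flux A w k y) * (ψ y) ^ 2
  have hF : ∀ k, ContDiff ℝ 1 (F k) := fun k => (hw1.inner ℝ (hV k)).mul (hψ1.pow 2)
  have hψ2c : HasCompactSupport fun y => (ψ y) ^ 2 :=
    hψc.comp_left (g := fun t : ℝ => t ^ 2) (by norm_num)
  have hFc : ∀ k, HasCompactSupport (F k) := fun k => hψ2c.mul_left
  have hFi := fun k => integral_fderiv_eq_zero (hF k) (hFc k) (e k)
  have hdF : ∀ k x, fderiv ℝ (F k) x (e k) =
      (inner ℝ (w x) (fderiv ℝ (flux A w k) x (e k)) + inner ℝ (pdC w x k) (flux A w k x))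
        * (ψ x) ^ 2 + 2 * ψ x * fderiv ℝ ψ x (e k) * inner ℝ (w x) (flux A w k x) := by
    intro k x
    have dw := hw1.differentiable (by norm_num) x
    have dV := (hV k).differentiable (by norm_num) x
    have dψ := hψ1.differentiable (by norm_num) x
    have h := ((dw.inner ℝ dV).hasFDerivAt.mul (dψ.hasFDerivAt.pow 2)).fderiv
    have h' : fderiv ℝ (F k) x = _ := h
    rw [h']
    simp only [add_apply, smul_apply, smul_eq_mul,
      fderiv_inner_apply ℝ dw dV, pdC, he]
    simp
    ring
  have hpt : ∀ x, lam / 2 * ((∑ k, ‖pdC w x k‖ ^ 2) * (ψ x) ^ 2)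
      - 2 * Lam ^ 2 / lam * (‖w x‖ ^ 2 * ∑ k, (fderiv ℝ ψ x (e k)) ^ 2)
      ≤ ∑ k, fderiv ℝ (F k) x (e k) := by
    intro x
    simp only [hdF, Finset.sum_add_distrib, ← Finset.sum_mul]
    have h1 : 0 ≤ ∑ k, inner ℝ (w x) (fderiv ℝ (flux A w k) x (e k)) := by
      have := inner_divAgrad hw (heq x)
      rw [divAgrad, inner_sum] at this
      refine le_of_le_of_eq ?_ this.symm
      exact mul_nonneg (by norm_num) (hmono x)
    have h2 := hE.le_inner_flux w x
    have h3 : ∑ k, ‖flux A w k x‖ ^ 2 ≤ Lam ^ 2 * ∑ k, ‖pdC w x k‖ ^ 2 :=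
      (hE x (pdC w x)).2
    -- Young's inequality with weight `λ / (2Λ²)`, so that `|V|² ≤ Λ²|∇w|²` costs half the
    -- ellipticity term.
    have h4 : -(lam / (2 * Lam ^ 2) * (∑ k, ‖flux A w k x‖ ^ 2) * (ψ x) ^ 2)
        - 2 * Lam ^ 2 / lam * (‖w x‖ ^ 2 * ∑ k, (fderiv ℝ ψ x (e k)) ^ 2)
        ≤ ∑ k, 2 * ψ x * fderiv ℝ ψ x (e k) * inner ℝ (w x) (flux A w k x) := by
      rw [Finset.mul_sum, Finset.mul_sum, Finset.mul_sum, Finset.sum_mul, ← Finset.sum_neg_distrib,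
        ← Finset.sum_sub_distrib]
      refine Finset.sum_le_sum fun k _ => ?_
      have hcs := abs_real_inner_le_norm (w x) (flux A w k x)
      set a := ‖flux A w k x‖
      set b := ‖w x‖
      set d := fderiv ℝ ψ x (e k)
      set i := inner ℝ (w x) (flux A w k x)
      set p := ψ x
      have hc : |2 * p * d * i| ≤ 2 * (a * |p|) * (b * |d|) := by
        rw [abs_mul, abs_mul, abs_mul, abs_two]
        calc 2 * |p| * |d| * |i| ≤ 2 * |p| * |d| * (b * a) := by gcongr
          _ = _ := by ring
      have hy : 2 * (a * |p|) * (b * |d|) ≤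
          lam / (2 * Lam ^ 2) * (a * |p|) ^ 2 + 2 * Lam ^ 2 / lam * (b * |d|) ^ 2 := by
        have : lam / (2 * Lam ^ 2) * (a * |p|) ^ 2 + 2 * Lam ^ 2 / lam * (b * |d|) ^ 2
            - 2 * (a * |p|) * (b * |d|)
            = lam / (2 * Lam ^ 2) * (a * |p| - 2 * Lam ^ 2 / lam * (b * |d|)) ^ 2 := by
          field_simp
          ring
        have h0 : 0 ≤ lam / (2 * Lam ^ 2) * (a * |p| - 2 * Lam ^ 2 / lam * (b * |d|)) ^ 2 := by
          positivity
        linarith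
      rw [mul_pow, mul_pow, sq_abs, sq_abs] at hy
      have := neg_abs_le (2 * p * d * i)
      linarith
    have h5 : lam / (2 * Lam ^ 2) * (∑ k, ‖flux A w k x‖ ^ 2) * (ψ x) ^ 2
        ≤ lam / 2 * ((∑ k, ‖pdC w x k‖ ^ 2) * (ψ x) ^ 2) := by
      calc _ ≤ lam / (2 * Lam ^ 2) * (Lam ^ 2 * ∑ k, ‖pdC w x k‖ ^ 2) * (ψ x) ^ 2 := by gcongr
        _ = _ := by field_simp
    have h6 := mul_le_mul_of_nonneg_right h2 (sq_nonneg (ψ x))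
    have h7 := mul_nonneg h1 (sq_nonneg (ψ x))
    linarith
  have hI1 : Integrable fun x => (∑ k, ‖pdC w x k‖ ^ 2) * (ψ x) ^ 2 := by
    refine Continuous.integrable_of_hasCompactSupport ?_ hψ2c.mul_left
    refine Continuous.mul ?_ (hψ.continuous.pow 2)
    refine continuous_finsetSum _ fun k _ => Continuous.pow (Continuous.norm ?_) 2
    exact (hw.continuous_fderiv (by norm_num)).clm_apply continuous_const
  have hI2 : Integrable fun x => ‖w x‖ ^ 2 * ∑ k, (fderiv ℝ ψ x (e k)) ^ 2 := by
    refine Continuous.integrable_of_hasCompactSupport ?_ (HasCompactSupport.mul_left ?_)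
    · refine (hw.continuous.norm.pow 2).mul ?_
      refine continuous_finsetSum _ fun k _ => Continuous.pow ?_ 2
      exact (hψ1.continuous_fderiv (by norm_num)).clm_apply continuous_const
    · exact (hψc.fderiv ℝ).comp_left
        (g := fun L : EuclideanSpace ℝ (Fin n) →L[ℝ] ℝ => ∑ k, (L (e k)) ^ 2) (by simp)
  have hmain := integral_mono ((hI1.const_mul (lam / 2)).sub (hI2.const_mul (2 * Lam ^ 2 / lam)))
    (integrable_finsetSum _ fun k _ => (hFi k).1) hpt
  rw [integral_finsetSum _ fun k _ => (hFi k).1,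
    Finset.sum_eq_zero fun k _ => (hFi k).2] at hmain
  simp only [Pi.sub_apply] at hmain
  rw [integral_sub (hI1.const_mul _) (hI2.const_mul _), integral_const_mul,
    integral_const_mul] at hmain
  have hl : lam / 2 * ∫ x, (∑ k, ‖pdC w x k‖ ^ 2) * (ψ x) ^ 2 ≤
      lam / 2 * (4 * Lam ^ 2 / lam ^ 2 *
        ∫ x, ‖w x‖ ^ 2 * ∑ k, (fderiv ℝ ψ x (e k)) ^ 2) := by
    refine (sub_nonpos.mp hmain).trans_eq ?_
    field_simp
    ring
  exact le_of_mul_le_mul_left hl (by positivity)
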